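/- For z ≠ 0 the periodic Green's function satisfies G(z,t) = (1/2π) log r − (1/2π) Σ_{m∈ℤ, m≠0} K₀(|m| r) e^{imt}, where K₀ is the second modified Bessel function; consequently there exists C > 0 such that |∇^k(G(z,t) − (1/2π) log r)| ≤ C e^{−r} for all r ≥ 2 and k = 0, 1, 2. -/

import Mathlib

open Real Filter

noncomputable section

/-- ℝ³ = ℝ² × ℝ, the universal cover of ℝ² × S¹; coordinates `(z, t)` with `r = |z|`. -/
abbrev E3 := EuclideanSpace ℝ (Fin 3)

/-- The regularising constants `a_{|m|}`. -/
def aCoeff (m : ℤ) : ℝ :=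
  if m = 0 then 2 * (Real.log (4 * Real.pi) - Real.eulerMascheroniConstant) / (2 * Real.pi)
  else 1 / (2 * |(m : ℝ)| * Real.pi)

/-- The `m`-th summand of the series defining the Green's function. -/
def gTerm (m : ℤ) (x : E3) : ℝ :=
  -(1 / 2) * (1 / Real.sqrt ((x 0) ^ 2 + (x 1) ^ 2 + (x 2 - 2 * m * Real.pi) ^ 2) - aCoeff m)

/-- The singular points `(0, 2kπ)`. -/
def singPt (k : ℤ) : E3 := (2 * k * Real.pi) • EuclideanSpace.single (2 : Fin 3) (1 : ℝ)

/-- `r = |z|`, the distance from the axis. -/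
def radius (x : E3) : ℝ := Real.sqrt ((x 0) ^ 2 + (x 1) ^ 2)

/-- The modified Bessel function of the second kind of order `0`,
`K₀(x) = ∫₀^∞ e^{−x cosh t} dt`. -/
def besselK0 (x : ℝ) : ℝ := ∫ t in Set.Ioi (0 : ℝ), Real.exp (-x * Real.cosh t)

open MeasureTheory Metric
open scoped Topology FourierTransform

/-!
Writing `1 / √(r² + s²) = (2 / π) ∫₀^∞ dx / (r² + x² + s²)` reduces the Coulomb series to Poisson
summation for the Lorentzian `1 / (w² + s²)` with `w² = r² + x²`. Only after subtracting from each
term its mean over the period cell of length `2π` around it do the sums and the integral converge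
together; on the Fourier side this removes exactly the zero mode, and the modes `m ≠ 0` integrate to
`K₀(|m| r) e^{imt}`. The cell means add up to integrals of `1 / √(r² + s²)` over growing intervals,
so compared with the constants `a_{|m|}` (harmonic numbers) they leave `-(log r) / π`.

For the decay, each mode extends holomorphically to a ball of fixed radius in `ℂ³` around any real
point with `r ≥ δ`, the extensions are summably bounded by a multiple of `e^{-r}`, and Cauchy's
estimates turn this bound into one for all derivatives.
-/

/-! ### Cauchy estimates for holomorphic functions of several variables -/

section Holomorphic

universe u

variable {E F : Type u} [NormedAddCommGroup E] [NormedSpace ℂ E] [NormedAddCommGroup F]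
  [NormedSpace ℂ F]

lemma norm_fderiv_le_of_forall_mem_ball {f : E → F} {c : E} {ρ B : ℝ} (hρ : 0 < ρ)
    (hf : DifferentiableOn ℂ f (ball c ρ)) (hB : ∀ z ∈ ball c ρ, ‖f z‖ ≤ B) :
    ‖fderiv ℂ f c‖ ≤ 2 * B / ρ := by
  refine Complex.norm_fderiv_le_div_of_mapsTo_ball hf (fun z hz => ?_) hρ
  rw [mem_closedBall_iff_norm]
  linarith [norm_sub_le (f z) (f c), hB z hz, hB c (mem_ball_self hρ)]

lemma norm_fderiv_le_of_mem_ball_half {f : E → F} {c z : E} {ρ B : ℝ}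
    (hf : DifferentiableOn ℂ f (ball c ρ)) (hB : ∀ z ∈ ball c ρ, ‖f z‖ ≤ B)
    (hz : z ∈ ball c (ρ / 2)) : ‖fderiv ℂ f z‖ ≤ 4 / ρ * B := by
  have hρ : 0 < ρ / 2 := pos_of_mem_ball hz
  have hsub : ball z (ρ / 2) ⊆ ball c ρ := ball_subset_ball' (by linarith [mem_ball.1 hz])
  refine (norm_fderiv_le_of_forall_mem_ball hρ (hf.mono hsub) fun y hy =>
    hB y (hsub hy)).trans_eq ?_
  field_simp
  ring

lemma norm_iteratedFDeriv_le_of_forall_mem_ball {k : ℕ} {f : E → F} {c : E} {ρ B : ℝ} (hρ : 0 < ρ)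
    (hf : ContDiffOn ℂ k f (ball c ρ)) (hB : ∀ z ∈ ball c ρ, ‖f z‖ ≤ B) :
    ‖iteratedFDeriv ℂ k f c‖ ≤ (2 ^ (k + 1) / ρ) ^ k * B := by
  induction k generalizing F ρ B with
  | zero => simpa using hB c (mem_ball_self hρ)
  | succ k ih =>
    have hB0 : 0 ≤ B := (norm_nonneg _).trans (hB c (mem_ball_self hρ))
    have hf' : ContDiffOn ℂ k (fderiv ℂ f) (ball c (ρ / 2)) :=
      (hf.fderiv_of_isOpen isOpen_ball (by simp)).mono (ball_subset_ball (by linarith))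
    have hfd := hf.differentiableOn (by simp)
    rw [← norm_iteratedFDeriv_fderiv]
    calc ‖iteratedFDeriv ℂ k (fderiv ℂ f) c‖ ≤ (2 ^ (k + 1) / (ρ / 2)) ^ k * (4 / ρ * B) :=
          ih (by positivity) hf' fun z hz => norm_fderiv_le_of_mem_ball_half hfd hB hz
      _ ≤ (2 ^ (k + 1 + 1) / ρ) ^ k * (2 ^ (k + 1 + 1) / ρ * B) := by
          have h4 : (4 : ℝ) ≤ 2 ^ (k + 1 + 1) := by
            rw [pow_succ, pow_succ]
            linarith [one_le_pow₀ (M₀ := ℝ) one_le_two (n := k)]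
          gcongr ?_ ^ k * (?_ / ρ * B)
          rw [div_div_eq_mul_div, ← pow_succ]
      _ = (2 ^ (k + 1 + 1) / ρ) ^ (k + 1) * B := by ring

lemma hasFDerivAt_tsum_of_norm_le_ball {ι : Type*} [CompleteSpace F] {f : ι → E → F} {b : ι → ℝ}
    {c z : E} {ρ : ℝ} (hb : Summable b) (hf : ∀ i, DifferentiableOn ℂ (f i) (ball c ρ))
    (hfb : ∀ i, ∀ z ∈ ball c ρ, ‖f i z‖ ≤ b i) (hz : z ∈ ball c (ρ / 2)) :
    HasFDerivAt (fun y => ∑' i, f i y) (∑' i, fderiv ℂ (f i) z) z := by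
  have hsub : ball c (ρ / 2) ⊆ ball c ρ :=
    ball_subset_ball (by linarith [pos_of_mem_ball hz])
  exact hasFDerivAt_tsum_of_isPreconnected (hb.mul_left (4 / ρ)) isOpen_ball
    (convex_ball c (ρ / 2)).isPreconnected
    (fun i y hy => ((hf i).differentiableAt (isOpen_ball.mem_nhds (hsub hy))).hasFDerivAt)
    (fun i y hy => norm_fderiv_le_of_mem_ball_half (hf i) (hfb i) hy) hz
    (.of_norm_bounded hb fun i => hfb i z (hsub hz)) hz

lemma contDiffOn_tsum_of_norm_le {ι : Type*} [CompleteSpace F] {n : ℕ} {U : Set E}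
    (hU : IsOpen U) {f : ι → E → F} {b : ι → ℝ} (hb : Summable b)
    (hf : ∀ i, ContDiffOn ℂ n (f i) U) (hfb : ∀ i, ∀ z ∈ U, ‖f i z‖ ≤ b i) :
    ContDiffOn ℂ n (fun z => ∑' i, f i z) U := by
  induction n generalizing F U b with
  | zero =>
    simp only [Nat.cast_zero, contDiffOn_zero] at hf ⊢
    exact continuousOn_tsum hf hb hfb
  | succ n ih =>
    intro c hc
    obtain ⟨ρ, hρ, hρU⟩ := isOpen_iff.1 hU c hc
    have hd (i : ι) : DifferentiableOn ℂ (f i) (ball c ρ) :=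
      ((hf i).differentiableOn (by simp)).mono hρU
    have hfb' (i : ι) : ∀ z ∈ ball c ρ, ‖f i z‖ ≤ b i := fun z hz => hfb i z (hρU hz)
    have hball : ball c (ρ / 2) ∈ 𝓝 c := ball_mem_nhds c (by positivity)
    have hf' (i : ι) : ContDiffOn ℂ n (fderiv ℂ (f i)) (ball c (ρ / 2)) :=
      ((hf i).fderiv_of_isOpen hU (by simp)).mono ((ball_subset_ball (by linarith)).trans hρU)
    refine ContDiffAt.contDiffWithinAt ?_
    rw [Nat.cast_succ, contDiffAt_succ_iff_hasFDerivAt]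
    exact ⟨fun z => ∑' i, fderiv ℂ (f i) z,
      ⟨_, hball, fun z hz => hasFDerivAt_tsum_of_norm_le_ball hb hd hfb' hz⟩,
      (ih isOpen_ball (hb.mul_left (4 / ρ)) hf' fun i z hz =>
        norm_fderiv_le_of_mem_ball_half (hd i) (hfb' i) hz).contDiffAt hball⟩

end Holomorphic

lemma norm_iteratedFDeriv_comp_clm_le {𝕜 E F G : Type*} [NontriviallyNormedField 𝕜]
    [NormedAddCommGroup E] [NormedSpace 𝕜 E] [NormedAddCommGroup F] [NormedSpace 𝕜 F]
    [NormedAddCommGroup G] [NormedSpace 𝕜 G] (L : G →L[𝕜] E) {f : E → F} {U : Set E} {x : G} {k : ℕ}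
    (hU : IsOpen U) (hf : ContDiffOn 𝕜 k f U) (hx : L x ∈ U) :
    ‖iteratedFDeriv 𝕜 k (f ∘ L) x‖ ≤ ‖iteratedFDeriv 𝕜 k f (L x)‖ * ‖L‖ ^ k := by
  have hV : IsOpen (L ⁻¹' U) := hU.preimage L.continuous
  rw [← iteratedFDerivWithin_of_isOpen k hV hx,
    L.iteratedFDerivWithin_comp_right hf hU.uniqueDiffOn hV.uniqueDiffOn hx le_rfl,
    iteratedFDerivWithin_of_isOpen k hU hx]
  simpa using (iteratedFDeriv 𝕜 k f (L x)).norm_compContinuousLinearMap_le fun _ => L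

lemma norm_iteratedFDeriv_clm_comp_comp_clm_le {E F E' F' : Type*}
    [NormedAddCommGroup E] [NormedSpace ℂ E] [NormedAddCommGroup F] [NormedSpace ℂ F]
    [NormedAddCommGroup E'] [NormedSpace ℝ E'] [NormedAddCommGroup F'] [NormedSpace ℝ F']
    (A : F →L[ℝ] F') (L : E' →L[ℝ] E) {f : E → F} {U : Set E} {x : E'} {k : ℕ}
    (hU : IsOpen U) (hf : ContDiffOn ℂ k f U) (hx : L x ∈ U) :
    ‖iteratedFDeriv ℝ k (A ∘ f ∘ L) x‖ ≤ ‖A‖ * ‖L‖ ^ k * ‖iteratedFDeriv ℂ k f (L x)‖ := by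
  have hfR : ContDiffOn ℝ k f U := hf.restrict_scalars ℝ
  have hfx : ContDiffAt ℂ k f (L x) := hf.contDiffAt (hU.mem_nhds hx)
  calc ‖iteratedFDeriv ℝ k (A ∘ f ∘ L) x‖ ≤ ‖A‖ * ‖iteratedFDeriv ℝ k (f ∘ L) x‖ :=
        A.norm_iteratedFDeriv_comp_left
          ((hfR.contDiffAt (hU.mem_nhds hx)).comp x L.contDiff.contDiffAt) le_rfl
    _ ≤ ‖A‖ * (‖iteratedFDeriv ℝ k f (L x)‖ * ‖L‖ ^ k) := by
        gcongr
        exact norm_iteratedFDeriv_comp_clm_le L hU hfR hx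
    _ = ‖A‖ * ‖L‖ ^ k * ‖iteratedFDeriv ℂ k f (L x)‖ := by
        rw [← hfx.restrictScalars_iteratedFDeriv, Function.comp_apply,
          ContinuousMultilinearMap.norm_restrictScalars]
        ring

/-! ### Cell means and Poisson summation -/

lemma norm_cexp_neg_mul_abs_add (w ξ x : ℝ) :
    ‖Complex.exp (-(w * |x| : ℝ) + Complex.I * ξ * x)‖ = exp (-(w * |x|)) := by
  simp [Complex.norm_exp]

lemma integral_cexp_neg_mul_abs_add {w : ℝ} (hw : 0 < w) (ξ : ℝ) :
    ∫ x : ℝ, Complex.exp (-(w * |x| : ℝ) + Complex.I * ξ * x) =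
      ((2 * w / (w ^ 2 + ξ ^ 2) : ℝ) : ℂ) := by
  have hpos : 0 < ((w : ℂ) + Complex.I * ξ).re := by simpa
  have hneg : (-(w : ℂ) + Complex.I * ξ).re < 0 := by simpa
  have hIic : Set.EqOn (fun x : ℝ => Complex.exp ((w + Complex.I * ξ) * x))
      (fun x : ℝ => Complex.exp (-(w * |x| : ℝ) + Complex.I * ξ * x)) (Set.Iic 0) := by
    intro x (hx : x ≤ 0)
    simp only [abs_of_nonpos hx]
    push_cast
    ring_nf
  have hIoi : Set.EqOn (fun x : ℝ => Complex.exp ((-w + Complex.I * ξ) * x))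
      (fun x : ℝ => Complex.exp (-(w * |x| : ℝ) + Complex.I * ξ * x)) (Set.Ioi 0) := by
    intro x (hx : 0 < x)
    simp only [abs_of_pos hx]
    push_cast
    ring_nf
  rw [← intervalIntegral.integral_Iic_add_Ioi
      ((integrableOn_exp_mul_complex_Iic hpos 0).congr_fun hIic measurableSet_Iic)
      ((integrableOn_exp_mul_complex_Ioi hneg 0).congr_fun hIoi measurableSet_Ioi),
    ← setIntegral_congr_fun measurableSet_Iic hIic, ← setIntegral_congr_fun measurableSet_Ioi hIoi,
    integral_exp_mul_complex_Iic hpos, integral_exp_mul_complex_Ioi hneg]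
  have h1 : (w : ℂ) + Complex.I * ξ ≠ 0 := fun h => by simp [h] at hpos
  have h2 : -(w : ℂ) + Complex.I * ξ ≠ 0 := fun h => by simp [h] at hneg
  have h3 : (w : ℂ) ^ 2 + ξ ^ 2 ≠ 0 := by exact_mod_cast (by positivity : w ^ 2 + ξ ^ 2 ≠ 0)
  push_cast
  simp only [mul_zero, Complex.exp_zero]
  field_simp
  linear_combination (-2 * w * ξ ^ 2 : ℂ) * Complex.I_sq

lemma summable_inv_sq_add_sub_sq (w t : ℝ) :
    Summable fun m : ℤ => 1 / (w ^ 2 + (t - 2 * m * π) ^ 2) := by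
  have hs := ((Real.summable_one_div_int_add_rpow (-(t / (2 * π))) 2).2 one_lt_two).mul_left
    (1 / (4 * π ^ 2))
  have hfin : {m : ℤ | (m : ℝ) = t / (2 * π)}.Finite :=
    Set.Subsingleton.finite fun m hm n hn => by
      exact_mod_cast (show (m : ℝ) = t / (2 * π) from hm).trans (Eq.symm hn)
  refine .of_norm_bounded_eventually hs ?_
  filter_upwards [hfin.compl_mem_cofinite] with m hm
  have hm' : (m : ℝ) + -(t / (2 * π)) ≠ 0 := fun h => hm (by simpa [add_neg_eq_zero] using h)
  have hsq : 4 * π ^ 2 * (m + -(t / (2 * π))) ^ 2 = (t - 2 * m * π) ^ 2 := by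
    field_simp
    ring
  rw [Real.norm_of_nonneg (by positivity), rpow_two, sq_abs, one_div_mul_one_div, hsq]
  have : 0 < (t - 2 * m * π) ^ 2 := by
    rw [← hsq]
    positivity
  gcongr
  nlinarith

lemma summable_exp_neg_mul_abs_int {c : ℝ} (hc : 0 < c) :
    Summable fun m : ℤ => exp (-c * |(m : ℝ)|) := by
  have h : Summable fun n : ℕ => exp (-c * (n : ℝ)) := by
    simpa [mul_comm] using Real.summable_exp_nat_mul_of_ge (c := -c) (by linarith)
      (f := fun n => (n : ℝ)) (fun n => le_rfl)
  exact Summable.of_nat_of_neg (by simpa using h) (by simpa using h)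

lemma hasSum_cexp_neg_mul_abs_add {w : ℝ} (hw : 0 < w) (t : ℝ) :
    HasSum (fun m : ℤ => Complex.exp (-(w * |(m : ℝ)| : ℝ) + Complex.I * t * m))
      ((∑' m : ℤ, 2 * w / (w ^ 2 + (t - 2 * m * π) ^ 2) : ℝ) : ℂ) := by
  let f (x : ℝ) : ℂ := Complex.exp (-(w * |x| : ℝ) + Complex.I * t * x)
  have hfourier (m : ℝ) : 𝓕 f m = ((2 * w / (w ^ 2 + (t - 2 * m * π) ^ 2) : ℝ) : ℂ) := by
    rw [Real.fourier_real_eq_integral_exp_smul, ← integral_cexp_neg_mul_abs_add hw]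
    congr with x
    rw [smul_eq_mul, ← Complex.exp_add]
    congr 1
    push_cast
    ring
  have hdecay : f =O[cocompact ℝ] fun x => |x| ^ (-2 : ℝ) := by
    refine Asymptotics.IsBigO.of_norm_left ?_
    simp only [f, norm_cexp_neg_mul_abs_add]
    simpa [Function.comp_def] using ((isLittleO_exp_neg_mul_rpow_atTop hw (-2)).comp_tendsto
      (tendsto_norm_cocompact_atTop (E := ℝ))).isBigO
  have hsum : Summable fun m : ℤ => 𝓕 f m := by
    simp only [hfourier]
    exact Complex.summable_ofReal.2 (by
      simpa only [mul_one_div] using (summable_inv_sq_add_sub_sq w t).mul_left (2 * w))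
  have hpoisson := Real.tsum_eq_tsum_fourier_of_rpow_decay_of_summable (f := f) (by fun_prop)
    one_lt_two hdecay hsum 0
  have hs : Summable fun m : ℤ => f m :=
    .of_norm (by simpa only [f, norm_cexp_neg_mul_abs_add, neg_mul]
      using summable_exp_neg_mul_abs_int hw)
  have htsum : ∑' m : ℤ, f m = ((∑' m : ℤ, 2 * w / (w ^ 2 + (t - 2 * m * π) ^ 2) : ℝ) : ℂ) := by
    rw [Complex.ofReal_tsum]
    simpa [hfourier] using hpoisson
  simpa only [f, Complex.ofReal_intCast] using htsum ▸ hs.hasSum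

/-- The mean of `f` over the period cell of length `2π` centred at `τ`. -/
def cellMean (f : ℝ → ℝ) (τ : ℝ) : ℝ :=
  ⨍ s in (τ - π)..(τ + π), f s

lemma cellMean_eq_mul_integral (f : ℝ → ℝ) (τ : ℝ) :
    cellMean f τ = (2 * π)⁻¹ * ∫ s in (τ - π)..(τ + π), f s := by
  rw [cellMean, interval_average_eq, smul_eq_mul]
  ring_nf

lemma cellMean_const_mul (c : ℝ) (f : ℝ → ℝ) (τ : ℝ) :
    cellMean (fun s => c * f s) τ = c * cellMean f τ := by
  simp only [cellMean_eq_mul_integral, intervalIntegral.integral_const_mul]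
  ring

lemma abs_sub_cellMean_le {f : ℝ → ℝ} {a b τ : ℝ} (hf : Continuous f)
    (hab : ∀ s ∈ Set.Icc (τ - π) (τ + π), f s ∈ Set.Icc a b) : |f τ - cellMean f τ| ≤ b - a := by
  have hπ := pi_pos
  obtain ⟨c, hc, hfc⟩ := exists_eq_interval_average (a := τ - π) (b := τ + π) (by linarith)
    hf.continuousOn
  rw [cellMean, ← hfc]
  rw [Set.uIoo_of_lt (by linarith)] at hc
  exact abs_sub_le_of_le_of_le (hab τ ⟨by linarith, by linarith⟩).1
    (hab τ ⟨by linarith, by linarith⟩).2 (hab c (Set.Ioo_subset_Icc_self hc)).1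
    (hab c (Set.Ioo_subset_Icc_self hc)).2

lemma hasSum_cellMean {f : ℝ → ℝ} (hf : Integrable f) (t : ℝ) :
    HasSum (fun m : ℤ => cellMean f (t - 2 * m * π)) ((2 * π)⁻¹ * ∫ s, f s) := by
  have hg : Integrable fun u => f (t - 2 * π * u) :=
    (hf.comp_sub_left t).comp_mul_left' (by positivity)
  have hint : ∫ u, f (t - 2 * π * u) = (2 * π)⁻¹ * ∫ s, f s := by
    rw [Measure.integral_comp_mul_left (fun u => f (t - u)), integral_sub_left_eq_self f volume t,
      abs_of_pos (by positivity), smul_eq_mul]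
  rw [← hint]
  refine (hg.hasSum_intervalIntegral (-2⁻¹)).congr_fun fun m => ?_
  rw [intervalIntegral.integral_comp_sub_mul f (by positivity), cellMean_eq_mul_integral,
    smul_eq_mul]
  congr 2 <;> ring

lemma one_div_sq_add_sq_eq {a : ℝ} (ha : 0 < a) :
    (fun x : ℝ => 1 / (a ^ 2 + x ^ 2)) = fun x => a⁻¹ ^ 2 * (1 + (a⁻¹ * x) ^ 2)⁻¹ := by
  ext x
  field_simp

lemma integrable_one_div_sq_add_sq {a : ℝ} (ha : 0 < a) :
    Integrable fun x : ℝ => 1 / (a ^ 2 + x ^ 2) := by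
  rw [one_div_sq_add_sq_eq ha]
  exact (integrable_inv_one_add_sq.comp_mul_left' (inv_ne_zero ha.ne')).const_mul _

lemma integral_one_div_sq_add_sq {a : ℝ} (ha : 0 < a) :
    ∫ x : ℝ, 1 / (a ^ 2 + x ^ 2) = π / a := by
  rw [one_div_sq_add_sq_eq ha, integral_const_mul,
    Measure.integral_comp_mul_left (fun x => (1 + x ^ 2)⁻¹), integral_univ_inv_one_add_sq, inv_inv,
    abs_of_pos ha, smul_eq_mul]
  field_simp

lemma integral_Ioi_one_div_sq_add_sq {a : ℝ} (ha : 0 < a) :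
    ∫ x in Set.Ioi (0 : ℝ), 1 / (a ^ 2 + x ^ 2) = π / 2 * (1 / a) := by
  rw [one_div_sq_add_sq_eq ha, integral_const_mul,
    integral_comp_mul_left_Ioi (fun x => (1 + x ^ 2)⁻¹) 0 (inv_pos.2 ha), mul_zero,
    integral_Ioi_inv_one_add_sq, arctan_zero, inv_inv, smul_eq_mul]
  field_simp
  ring

lemma hasSum_subtype_ne {α β : Type*} [AddCommGroup α] [TopologicalSpace α]
    [IsTopologicalAddGroup α] {f : β → α} {a : α} (hf : HasSum f a) (b : β) :
    HasSum (fun x : {x // x ≠ b} => f x) (a - f b) :=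
  (hasSum_unique fun x : ({b} : Set β) => f x).hasSum_compl_iff.2 (by simpa using hf)

lemma hasSum_cexp_neg_mul_abs_add_ne_zero {w : ℝ} (hw : 0 < w) (t : ℝ) :
    HasSum (fun m : {m : ℤ // m ≠ 0} =>
        Complex.exp (-(w * |((m : ℤ) : ℝ)| : ℝ) + Complex.I * t * (m : ℤ)))
      ((2 * w * ∑' m : ℤ, (1 / (w ^ 2 + (t - 2 * m * π) ^ 2) -
        cellMean (fun s => 1 / (w ^ 2 + s ^ 2)) (t - 2 * m * π)) : ℝ) : ℂ) := by
  have hmean := hasSum_cellMean (integrable_one_div_sq_add_sq hw) t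
  have hone : 2 * w * ((2 * π)⁻¹ * ∫ s : ℝ, 1 / (w ^ 2 + s ^ 2)) = 1 := by
    rw [integral_one_div_sq_add_sq hw]
    field_simp
  have hval : 2 * w * ∑' m : ℤ, (1 / (w ^ 2 + (t - 2 * m * π) ^ 2) -
      cellMean (fun s => 1 / (w ^ 2 + s ^ 2)) (t - 2 * m * π)) =
      ∑' m : ℤ, 2 * w / (w ^ 2 + (t - 2 * m * π) ^ 2) - 1 := by
    rw [(summable_inv_sq_add_sub_sq w t).tsum_sub hmean.summable, hmean.tsum_eq, mul_sub, hone,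
      ← tsum_mul_left]
    simp only [mul_one_div]
  rw [hval]
  simpa using hasSum_subtype_ne (hasSum_cexp_neg_mul_abs_add hw t) 0

lemma integral_cellMean {α : Type*} [MeasurableSpace α] {μ : Measure α} [SFinite μ]
    {f : ℝ → α → ℝ} {g : α → ℝ} {τ : ℝ}
    (hf : AEStronglyMeasurable (Function.uncurry f)
      ((volume.restrict (Set.uIoc (τ - π) (τ + π))).prod μ))
    (hg : Integrable g μ) (hfg : ∀ s x, ‖f s x‖ ≤ g x) :
    Integrable (fun x => cellMean (f · x) τ) μ ∧
      ∫ x, cellMean (f · x) τ ∂μ = cellMean (fun s => ∫ x, f s x ∂μ) τ := by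
  have : IsFiniteMeasure (volume.restrict (Set.uIoc (τ - π) (τ + π))) := by
    rw [Set.uIoc]
    infer_instance
  have hint : Integrable (Function.uncurry f)
      ((volume.restrict (Set.uIoc (τ - π) (τ + π))).prod μ) :=
    (hg.comp_snd _).mono' hf (.of_forall fun p => hfg p.1 p.2)
  simp only [cellMean_eq_mul_integral, integral_const_mul,
    intervalIntegral_integral_swap hint, and_true]
  refine Integrable.const_mul ?_ _
  rw [Set.uIoc_of_le (by linarith [pi_pos])] at hint
  simpa only [intervalIntegral.integral_of_le (show τ - π ≤ τ + π by linarith [pi_pos]),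
    Function.uncurry_apply_pair] using hint.integral_prod_right

lemma sqrt_sub_sqrt_le_sub {c a b : ℝ} (hab : a ≤ b) :
    √(c ^ 2 + b ^ 2) - √(c ^ 2 + a ^ 2) ≤ b - a := by
  rw [sub_le_iff_le_add, Real.sqrt_le_left (by positivity [sub_nonneg.2 hab])]
  have hsq := Real.sq_sqrt (show 0 ≤ c ^ 2 + a ^ 2 by positivity)
  have hle : a ≤ √(c ^ 2 + a ^ 2) := Real.le_sqrt_of_sq_le (by nlinarith)
  nlinarith

lemma one_div_sqrt_sub_one_div_sqrt_le {c a b : ℝ} (hc : 0 < c) (ha : 0 ≤ a) (hab : a ≤ b) :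
    1 / √(c ^ 2 + a ^ 2) - 1 / √(c ^ 2 + b ^ 2) ≤ (b - a) / (c ^ 2 + a ^ 2) := by
  have hle : √(c ^ 2 + a ^ 2) ≤ √(c ^ 2 + b ^ 2) := by gcongr
  have hpos : 0 < √(c ^ 2 + a ^ 2) := by positivity
  rw [div_sub_div _ _ hpos.ne' (hpos.trans_le hle).ne', one_mul, mul_one]
  refine div_le_div₀ (sub_nonneg.2 hab) (sqrt_sub_sqrt_le_sub hab) (by positivity) ?_
  calc c ^ 2 + a ^ 2 = √(c ^ 2 + a ^ 2) * √(c ^ 2 + a ^ 2) :=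
        (Real.mul_self_sqrt (by positivity)).symm
    _ ≤ √(c ^ 2 + a ^ 2) * √(c ^ 2 + b ^ 2) := by gcongr

lemma abs_mem_Icc_of_mem_Icc {τ s : ℝ} (hs : s ∈ Set.Icc (τ - π) (τ + π)) :
    |s| ∈ Set.Icc (max (|τ| - π) 0) (|τ| + π) := by
  have hτs : |τ - s| ≤ π := abs_le.2 ⟨by linarith [hs.2], by linarith [hs.1]⟩
  refine ⟨max_le (by linarith [abs_sub_abs_le_abs_sub τ s]) (abs_nonneg s), ?_⟩
  linarith [abs_sub_abs_le_abs_sub s τ, abs_sub_comm s τ]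

lemma abs_one_div_sub_cellMean_le {c : ℝ} (hc : 0 < c) (τ : ℝ) :
    |1 / (c + τ ^ 2) - cellMean (fun s => 1 / (c + s ^ 2)) τ| ≤
      1 / (c + max (|τ| - π) 0 ^ 2) - 1 / (c + (|τ| + π) ^ 2) := by
  have hcont : Continuous fun s : ℝ => 1 / (c + s ^ 2) :=
    continuous_const.div (by fun_prop) fun s => by positivity
  refine abs_sub_cellMean_le hcont fun s hs => ?_
  obtain ⟨hlow, hupp⟩ := abs_mem_Icc_of_mem_Icc hs
  rw [← sq_abs s]
  constructor <;> gcongr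

lemma sq_add_sq_le_mul_sq_add_max_sq {r : ℝ} (hr : 0 < r) (τ : ℝ) :
    r ^ 2 + τ ^ 2 ≤ (2 + 2 * π ^ 2 / r ^ 2) * (r ^ 2 + max (|τ| - π) 0 ^ 2) := by
  have hτ : |τ| ≤ max (|τ| - π) 0 + π := by linarith [le_max_left (|τ| - π) 0]
  have hτ2 : τ ^ 2 ≤ 2 * max (|τ| - π) 0 ^ 2 + 2 * π ^ 2 := by
    rw [← sq_abs]
    nlinarith [abs_nonneg τ, sq_nonneg (max (|τ| - π) 0 - π)]
  calc r ^ 2 + τ ^ 2 ≤ 2 * r ^ 2 + 2 * π ^ 2 / r ^ 2 * r ^ 2 + 2 * max (|τ| - π) 0 ^ 2 := by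
        rw [div_mul_cancel₀ _ (by positivity)]
        nlinarith [sq_nonneg r]
    _ ≤ _ := by
        have : 0 ≤ 2 * π ^ 2 / r ^ 2 * max (|τ| - π) 0 ^ 2 := by positivity
        linarith

lemma one_div_sq_add_sq_add_sq_eq (r s x : ℝ) :
    1 / (r ^ 2 + x ^ 2 + s ^ 2) = 1 / (√(r ^ 2 + s ^ 2) ^ 2 + x ^ 2) := by
  rw [Real.sq_sqrt (by positivity)]
  ring

lemma integrable_one_div_sq_add_sq_add_sq {r : ℝ} (hr : 0 < r) (s : ℝ) :
    Integrable fun x : ℝ => 1 / (r ^ 2 + x ^ 2 + s ^ 2) := by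
  simp only [one_div_sq_add_sq_add_sq_eq]
  exact integrable_one_div_sq_add_sq (by positivity)

lemma integral_Ioi_one_div_sq_add_sq_add_sq {r : ℝ} (hr : 0 < r) (s : ℝ) :
    ∫ x in Set.Ioi (0 : ℝ), 1 / (r ^ 2 + x ^ 2 + s ^ 2) = π / 2 * (1 / √(r ^ 2 + s ^ 2)) := by
  simp only [one_div_sq_add_sq_add_sq_eq]
  exact integral_Ioi_one_div_sq_add_sq (by positivity)

lemma integral_Ioi_cellMean_one_div_sq_add_sq {r : ℝ} (hr : 0 < r) (τ : ℝ) :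
    IntegrableOn (fun x => cellMean (fun s => 1 / (r ^ 2 + x ^ 2 + s ^ 2)) τ) (Set.Ioi 0) ∧
      ∫ x in Set.Ioi (0 : ℝ), cellMean (fun s => 1 / (r ^ 2 + x ^ 2 + s ^ 2)) τ =
        π / 2 * cellMean (fun s => 1 / √(r ^ 2 + s ^ 2)) τ := by
  rw [← cellMean_const_mul]
  simp only [← integral_Ioi_one_div_sq_add_sq_add_sq hr]
  refine integral_cellMean (f := fun s x => 1 / (r ^ 2 + x ^ 2 + s ^ 2))
    (Continuous.div continuous_const (by fun_prop) fun p => by positivity).aestronglyMeasurable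
    (integrable_one_div_sq_add_sq hr).integrableOn fun s x => ?_
  rw [Real.norm_of_nonneg (by positivity)]
  exact one_div_le_one_div_of_le (by positivity) (le_add_of_nonneg_right (sq_nonneg s))

lemma integrableOn_Ioi_one_div_sub_cellMean {r : ℝ} (hr : 0 < r) (τ : ℝ) :
    IntegrableOn (fun x => 1 / (r ^ 2 + x ^ 2 + τ ^ 2) -
      cellMean (fun s => 1 / (r ^ 2 + x ^ 2 + s ^ 2)) τ) (Set.Ioi 0) :=
  (integrable_one_div_sq_add_sq_add_sq hr τ).integrableOn.sub
    (integral_Ioi_cellMean_one_div_sq_add_sq hr τ).1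

lemma integral_Ioi_one_div_sub_cellMean {r : ℝ} (hr : 0 < r) (τ : ℝ) :
    ∫ x in Set.Ioi (0 : ℝ), (1 / (r ^ 2 + x ^ 2 + τ ^ 2) -
      cellMean (fun s => 1 / (r ^ 2 + x ^ 2 + s ^ 2)) τ) =
      π / 2 * (1 / √(r ^ 2 + τ ^ 2) - cellMean (fun s => 1 / √(r ^ 2 + s ^ 2)) τ) := by
  obtain ⟨hint, heq⟩ := integral_Ioi_cellMean_one_div_sq_add_sq hr τ
  rw [integral_sub (integrable_one_div_sq_add_sq_add_sq hr τ).integrableOn hint, heq,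
    integral_Ioi_one_div_sq_add_sq_add_sq hr, mul_sub]

lemma integral_Ioi_norm_one_div_sub_cellMean_le {r : ℝ} (hr : 0 < r) (τ : ℝ) :
    ∫ x in Set.Ioi (0 : ℝ), ‖1 / (r ^ 2 + x ^ 2 + τ ^ 2) -
      cellMean (fun s => 1 / (r ^ 2 + x ^ 2 + s ^ 2)) τ‖ ≤
      π ^ 2 * (2 + 2 * π ^ 2 / r ^ 2) * (1 / (r ^ 2 + τ ^ 2)) := by
  have hπ := pi_pos
  set a := max (|τ| - π) 0
  have hint (s : ℝ) : IntegrableOn (fun x : ℝ => 1 / (r ^ 2 + x ^ 2 + s ^ 2)) (Set.Ioi 0) :=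
    (integrable_one_div_sq_add_sq_add_sq hr s).integrableOn
  have ha0 : 0 ≤ a := le_max_right _ _
  have hab : a ≤ |τ| + π := max_le (by linarith) (by positivity)
  have hba : |τ| + π - a ≤ 2 * π := by linarith [le_max_left (|τ| - π) 0]
  calc _ ≤ ∫ x in Set.Ioi (0 : ℝ),
          (1 / (r ^ 2 + x ^ 2 + a ^ 2) - 1 / (r ^ 2 + x ^ 2 + (|τ| + π) ^ 2)) := by
        refine integral_mono (integrableOn_Ioi_one_div_sub_cellMean hr τ).norm
          ((hint a).sub (hint (|τ| + π))) fun x => ?_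
        exact abs_one_div_sub_cellMean_le (c := r ^ 2 + x ^ 2) (by positivity) τ
    _ = π / 2 * (1 / √(r ^ 2 + a ^ 2) - 1 / √(r ^ 2 + (|τ| + π) ^ 2)) := by
        rw [integral_sub (hint a) (hint (|τ| + π)), integral_Ioi_one_div_sq_add_sq_add_sq hr,
          integral_Ioi_one_div_sq_add_sq_add_sq hr, mul_sub]
    _ ≤ π / 2 * (2 * π / (r ^ 2 + a ^ 2)) := by
        gcongr
        exact (one_div_sqrt_sub_one_div_sqrt_le hr ha0 hab).trans (by gcongr)
    _ ≤ _ := by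
        have hle : r ^ 2 + τ ^ 2 ≤ (2 + 2 * π ^ 2 / r ^ 2) * (r ^ 2 + a ^ 2) :=
          sq_add_sq_le_mul_sq_add_max_sq hr τ
        rw [mul_one_div, mul_div_assoc', div_le_div_iff₀ (by positivity) (by positivity)]
        nlinarith [sq_nonneg π]

lemma hasSum_integral_one_div_sub_cellMean {r : ℝ} (hr : 0 < r) (t : ℝ) :
    HasSum (fun m : ℤ => π / 2 * (1 / √(r ^ 2 + (t - 2 * m * π) ^ 2) -
        cellMean (fun s => 1 / √(r ^ 2 + s ^ 2)) (t - 2 * m * π)))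
      (∫ x in Set.Ioi (0 : ℝ), ∑' m : ℤ, (1 / (r ^ 2 + x ^ 2 + (t - 2 * m * π) ^ 2) -
        cellMean (fun s => 1 / (r ^ 2 + x ^ 2 + s ^ 2)) (t - 2 * m * π))) := by
  simp only [← integral_Ioi_one_div_sub_cellMean hr]
  refine hasSum_integral_of_summable_integral_norm
    (fun m => integrableOn_Ioi_one_div_sub_cellMean hr _) ?_
  exact ((summable_inv_sq_add_sub_sq r t).mul_left _).of_nonneg_of_le
    (fun m => integral_nonneg fun _ => norm_nonneg _)
    fun m => integral_Ioi_norm_one_div_sub_cellMean_le hr _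

/-! ### The Bessel expansion -/

lemma integrableOn_exp_neg_mul_cosh {x : ℝ} (hx : 0 < x) :
    IntegrableOn (fun s => exp (-x * cosh s)) (Set.Ioi 0) := by
  refine (exp_neg_integrableOn_Ioi 0 hx).mono' (by fun_prop) ?_
  refine (ae_restrict_iff' measurableSet_Ioi).2 (Eventually.of_forall fun s hs => ?_)
  rw [norm_of_nonneg (exp_pos _).le]
  gcongr 1
  have h1 : s ≤ cosh s :=
    (self_le_sinh_iff.2 (le_of_lt hs)).trans (sinh_lt_cosh s).le
  nlinarith

lemma besselK0_nonneg (x : ℝ) : 0 ≤ besselK0 x :=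
  integral_nonneg fun _ => (exp_pos _).le

lemma besselK0_le_exp_mul {δ x : ℝ} (hδ : 0 < δ) (hx : δ ≤ x) :
    besselK0 x ≤ exp (-(x - δ)) * besselK0 δ := by
  unfold besselK0
  rw [← integral_const_mul]
  refine integral_mono (integrableOn_exp_neg_mul_cosh (hδ.trans_le hx))
    ((integrableOn_exp_neg_mul_cosh hδ).const_mul _) fun s => ?_
  change exp (-x * cosh s) ≤ exp (-(x - δ)) * exp (-δ * cosh s)
  rw [← exp_add]
  gcongr 1
  nlinarith [one_le_cosh s]

lemma image_mul_sinh_Ioi {r : ℝ} (hr : 0 < r) :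
    (fun s => r * sinh s) '' Set.Ioi 0 = Set.Ioi 0 := by
  ext x
  refine ⟨?_, fun hx => ⟨arsinh (x / r), arsinh_pos_iff.2 (div_pos hx hr), ?_⟩⟩
  · rintro ⟨s, hs, rfl⟩
    exact mul_pos hr (sinh_pos_iff.2 hs)
  · simp only [sinh_arsinh]
    field_simp

lemma sqrt_sq_add_mul_sinh_sq {r : ℝ} (hr : 0 < r) (s : ℝ) :
    √(r ^ 2 + (r * sinh s) ^ 2) = r * cosh s := by
  rw [Real.sqrt_eq_iff_mul_self_eq_of_pos (mul_pos hr (cosh_pos s))]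
  linear_combination r ^ 2 * cosh_sq s

lemma abs_deriv_smul_exp_neg_mul_sqrt_div_sqrt {r : ℝ} (hr : 0 < r) (a s : ℝ) :
    |r * cosh s| • (exp (-(a * √(r ^ 2 + (r * sinh s) ^ 2))) / √(r ^ 2 + (r * sinh s) ^ 2)) =
      exp (-(a * r) * cosh s) := by
  have := cosh_pos s
  rw [sqrt_sq_add_mul_sinh_sq hr, abs_of_pos (by positivity), smul_eq_mul]
  field_simp

lemma injOn_mul_sinh {r : ℝ} (hr : 0 < r) (S : Set ℝ) : Set.InjOn (fun s => r * sinh s) S :=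
  fun _ _ _ _ h => sinh_injective (mul_left_cancel₀ hr.ne' h)

lemma integrableOn_exp_neg_mul_sqrt_div_sqrt {r a : ℝ} (hr : 0 < r) (ha : 0 < a) :
    IntegrableOn (fun x => exp (-(a * √(r ^ 2 + x ^ 2))) / √(r ^ 2 + x ^ 2)) (Set.Ioi 0) := by
  rw [← image_mul_sinh_Ioi hr, integrableOn_image_iff_integrableOn_abs_deriv_smul measurableSet_Ioi
    (fun s _ => ((hasDerivAt_sinh s).const_mul r).hasDerivWithinAt) (injOn_mul_sinh hr _)]
  simp only [abs_deriv_smul_exp_neg_mul_sqrt_div_sqrt hr]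
  exact integrableOn_exp_neg_mul_cosh (by positivity)

lemma integral_exp_neg_mul_sqrt_div_sqrt {r : ℝ} (hr : 0 < r) (a : ℝ) :
    ∫ x in Set.Ioi (0 : ℝ), exp (-(a * √(r ^ 2 + x ^ 2))) / √(r ^ 2 + x ^ 2) =
      besselK0 (a * r) := by
  rw [← image_mul_sinh_Ioi hr, integral_image_eq_integral_abs_deriv_smul measurableSet_Ioi
    (fun s _ => ((hasDerivAt_sinh s).const_mul r).hasDerivWithinAt) (injOn_mul_sinh hr _)]
  simp only [abs_deriv_smul_exp_neg_mul_sqrt_div_sqrt hr, besselK0]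

lemma one_le_abs_intCast {m : ℤ} (hm : m ≠ 0) : (1 : ℝ) ≤ |(m : ℝ)| := by
  exact_mod_cast Int.one_le_abs hm

lemma summable_besselK0_abs_mul {r : ℝ} (hr : 0 < r) :
    Summable fun m : {m : ℤ // m ≠ 0} => besselK0 (|((m : ℤ) : ℝ)| * r) := by
  have hexp := ((summable_exp_neg_mul_abs_int hr).subtype {m | m ≠ 0}).mul_right
    (exp r * besselK0 r)
  refine hexp.of_nonneg_of_le (fun m => besselK0_nonneg _) fun m => ?_
  refine (besselK0_le_exp_mul hr (le_mul_of_one_le_left hr.le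
    (one_le_abs_intCast m.2))).trans_eq ?_
  rw [Function.comp_apply, ← mul_assoc, ← exp_add]
  ring_nf

lemma hasSum_exp_neg_mul_sqrt_div_sqrt_mul_cexp {r : ℝ} (hr : 0 < r) (t x : ℝ) :
    HasSum (fun m : {m : ℤ // m ≠ 0} =>
        ((exp (-(|((m : ℤ) : ℝ)| * √(r ^ 2 + x ^ 2))) / √(r ^ 2 + x ^ 2) : ℝ) : ℂ) *
          Complex.exp (Complex.I * ((m : ℤ) : ℂ) * (t : ℂ)))
      ((2 * ∑' m : ℤ, (1 / (r ^ 2 + x ^ 2 + (t - 2 * m * π) ^ 2) -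
        cellMean (fun s => 1 / (r ^ 2 + x ^ 2 + s ^ 2)) (t - 2 * m * π)) : ℝ) : ℂ) := by
  have hw : 0 < √(r ^ 2 + x ^ 2) := by positivity
  have hsum := (hasSum_cexp_neg_mul_abs_add_ne_zero hw t).mul_left ((√(r ^ 2 + x ^ 2) : ℂ)⁻¹)
  rw [Real.sq_sqrt (by positivity), ← Complex.ofReal_inv, ← Complex.ofReal_mul, mul_assoc,
    mul_left_comm, inv_mul_cancel_left₀ hw.ne'] at hsum
  refine hsum.congr_fun fun m => ?_
  rw [Complex.exp_add, ← mul_assoc, ← Complex.ofReal_neg, ← Complex.ofReal_exp,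
    ← Complex.ofReal_mul, mul_comm |_|, div_eq_inv_mul, mul_right_comm Complex.I]

lemma hasSum_besselK0_mul_cexp {r : ℝ} (hr : 0 < r) (t : ℝ) :
    HasSum (fun m : {m : ℤ // m ≠ 0} => (besselK0 (|((m : ℤ) : ℝ)| * r) : ℂ) *
        Complex.exp (Complex.I * ((m : ℤ) : ℂ) * (t : ℂ)))
      ((π * ∑' m : ℤ, (1 / √(r ^ 2 + (t - 2 * m * π) ^ 2) -
        cellMean (fun s => 1 / √(r ^ 2 + s ^ 2)) (t - 2 * m * π)) : ℝ) : ℂ) := by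
  let F (m : {m : ℤ // m ≠ 0}) (x : ℝ) : ℂ :=
    ((exp (-(|((m : ℤ) : ℝ)| * √(r ^ 2 + x ^ 2))) / √(r ^ 2 + x ^ 2) : ℝ) : ℂ) *
      Complex.exp (Complex.I * ((m : ℤ) : ℂ) * (t : ℂ))
  have hint (m) : IntegrableOn (F m) (Set.Ioi 0) :=
    (integrableOn_exp_neg_mul_sqrt_div_sqrt hr (abs_pos.2 (by exact_mod_cast m.2))).ofReal.mul_const
      _
  have hnorm (m) : ∫ x in Set.Ioi (0 : ℝ), ‖F m x‖ = besselK0 (|((m : ℤ) : ℝ)| * r) := by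
    rw [← integral_exp_neg_mul_sqrt_div_sqrt hr]
    congr with x
    have : ‖Complex.exp (Complex.I * ((m : ℤ) : ℂ) * (t : ℂ))‖ = 1 := by simp [Complex.norm_exp]
    rw [norm_mul, this, mul_one, Complex.norm_real, Real.norm_of_nonneg (by positivity)]
  have hK (m) : ∫ x in Set.Ioi (0 : ℝ), F m x = (besselK0 (|((m : ℤ) : ℝ)| * r) : ℂ) *
      Complex.exp (Complex.I * ((m : ℤ) : ℂ) * (t : ℂ)) := by
    rw [integral_mul_const, integral_complex_ofReal, integral_exp_neg_mul_sqrt_div_sqrt hr]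
  have hmeans : ∫ x in Set.Ioi (0 : ℝ), ∑' m, F m x = ((π * ∑' m : ℤ,
      (1 / √(r ^ 2 + (t - 2 * m * π) ^ 2) -
        cellMean (fun s => 1 / √(r ^ 2 + s ^ 2)) (t - 2 * m * π)) : ℝ) : ℂ) := by
    simp only [F, (hasSum_exp_neg_mul_sqrt_div_sqrt_mul_cexp hr t _).tsum_eq]
    rw [integral_complex_ofReal, integral_const_mul,
      ← (hasSum_integral_one_div_sub_cellMean hr t).tsum_eq, tsum_mul_left, ← mul_assoc,
      mul_div_cancel₀ π two_ne_zero]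
  simpa only [hK, hmeans] using hasSum_integral_of_summable_integral_norm hint
    (by simpa only [hnorm] using summable_besselK0_abs_mul hr)

lemma sum_Icc_cellMean {f : ℝ → ℝ} (hf : Continuous f) (t : ℝ) (N : ℕ) :
    ∑ m ∈ Finset.Icc (-N : ℤ) N, cellMean f (t - 2 * m * π) =
      (2 * π)⁻¹ * ∫ s in (t - (2 * N * π + π))..(t + (2 * N * π + π)), f s := by
  have hint (a b : ℝ) : IntervalIntegrable f volume a b := hf.intervalIntegrable a b
  induction N with
  | zero => simp [cellMean_eq_mul_integral]
  | succ N ih =>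
    have hleft : cellMean f (t - 2 * (N + 1) * π) = (2 * π)⁻¹ *
        ∫ s in (t - (2 * (N + 1) * π + π))..(t - (2 * N * π + π)), f s := by
      rw [cellMean_eq_mul_integral]
      ring_nf
    have hright : cellMean f (t - 2 * (-(N + 1)) * π) = (2 * π)⁻¹ *
        ∫ s in (t + (2 * N * π + π))..(t + (2 * (N + 1) * π + π)), f s := by
      rw [cellMean_eq_mul_integral]
      ring_nf
    have hsplit := intervalIntegral.integral_add_adjacent_intervals
      (hint (t - (2 * (N + 1) * π + π)) (t - (2 * N * π + π)))
      (hint _ (t + (2 * (N + 1) * π + π)))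
    rw [← intervalIntegral.integral_add_adjacent_intervals
      (hint (t - (2 * N * π + π)) (t + (2 * N * π + π))) (hint _ _)] at hsplit
    rw [Nat.cast_succ, Finset.sum_Icc_succ_eq_add_endpoints, ih]
    push_cast
    rw [hleft, hright, ← hsplit]
    ring

lemma sum_Icc_aCoeff (N : ℕ) :
    ∑ m ∈ Finset.Icc (-N : ℤ) N, aCoeff m = aCoeff 0 + harmonic N / π := by
  induction N with
  | zero => simp
  | succ N ih =>
    have hN : (N + 1 : ℤ) ≠ 0 := by positivity
    have habs : |(N + 1 : ℝ)| = N + 1 := abs_of_pos (by positivity)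
    rw [Nat.cast_succ, Finset.sum_Icc_succ_eq_add_endpoints, ih, harmonic_succ, aCoeff, aCoeff,
      if_neg hN, if_neg (neg_ne_zero.2 hN)]
    push_cast
    rw [abs_neg, habs]
    field_simp
    ring

lemma hasDerivAt_arsinh_div {r : ℝ} (hr : 0 < r) (x : ℝ) :
    HasDerivAt (fun x => arsinh (x / r)) (1 / √(r ^ 2 + x ^ 2)) x := by
  have hsqrt : √(r ^ 2 + x ^ 2) = r * √(1 + (x / r) ^ 2) := by
    rw [← Real.sqrt_sq hr.le, ← Real.sqrt_mul (by positivity), Real.sqrt_sq hr.le]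
    congr 1
    field_simp
  refine ((hasDerivAt_id x).div_const r).arsinh.congr_deriv ?_
  rw [hsqrt]
  simp [field]

lemma continuous_one_div_sqrt_sq_add_sq {r : ℝ} (hr : 0 < r) :
    Continuous fun x => 1 / √(r ^ 2 + x ^ 2) :=
  continuous_const.div (by fun_prop) fun x => by positivity

lemma integral_one_div_sqrt_sq_add_sq {r : ℝ} (hr : 0 < r) (a b : ℝ) :
    ∫ x in a..b, 1 / √(r ^ 2 + x ^ 2) = arsinh (b / r) - arsinh (a / r) :=
  intervalIntegral.integral_eq_sub_of_hasDerivAt (fun x _ => hasDerivAt_arsinh_div hr x)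
    ((continuous_one_div_sqrt_sq_add_sq hr).intervalIntegrable a b)

lemma tendsto_arsinh_sub_log :
    Tendsto (fun x => arsinh x - log x) atTop (𝓝 (log 2)) := by
  have hlim : Tendsto (fun x : ℝ => log (1 + √(x⁻¹ ^ 2 + 1))) atTop (𝓝 (log (1 + √(0 ^ 2 + 1)))) :=
    (((tendsto_inv_atTop_zero.pow 2).add_const 1).sqrt.const_add 1).log (by positivity)
  rw [zero_pow two_ne_zero, zero_add, Real.sqrt_one, one_add_one_eq_two] at hlim
  refine hlim.congr' ?_
  filter_upwards [eventually_gt_atTop 0] with x hx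
  have hsqrt : √(1 + x ^ 2) = x * √(x⁻¹ ^ 2 + 1) := by
    rw [← Real.sqrt_sq hx.le, ← Real.sqrt_mul (by positivity), Real.sqrt_sq hx.le]
    congr 1
    field_simp
  rw [arsinh, hsqrt, ← Real.log_div (by positivity) hx.ne']
  congr 1
  field_simp

lemma tendsto_log_mul_add_sub_log_natCast {a : ℝ} (ha : 0 < a) (b : ℝ) :
    Tendsto (fun N : ℕ => log (a * N + b) - log N) atTop (𝓝 (log a)) := by
  have hlim : Tendsto (fun N : ℕ => log (a + b / N)) atTop (𝓝 (log (a + 0))) :=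
    ((tendsto_const_div_atTop_nhds_zero_nat b).const_add a).log (by simpa using ha.ne')
  rw [add_zero] at hlim
  refine hlim.congr' ?_
  have hlin : Tendsto (fun N : ℕ => a * (N : ℝ) + b) atTop atTop :=
    tendsto_atTop_add_const_right _ b (tendsto_natCast_atTop_atTop.const_mul_atTop ha)
  filter_upwards [eventually_gt_atTop 0, hlin.eventually_gt_atTop 0] with N hN hpos
  have hN' : (0 : ℝ) < N := by exact_mod_cast hN
  rw [← Real.log_div hpos.ne' hN'.ne']
  congr 1
  field_simp

lemma tendsto_arsinh_mul_add_sub_log_natCast {a : ℝ} (ha : 0 < a) (b : ℝ) :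
    Tendsto (fun N : ℕ => arsinh (a * N + b) - log N) atTop (𝓝 (log (2 * a))) := by
  have hlin : Tendsto (fun N : ℕ => a * (N : ℝ) + b) atTop atTop :=
    tendsto_atTop_add_const_right _ b (tendsto_natCast_atTop_atTop.const_mul_atTop ha)
  rw [Real.log_mul two_ne_zero ha.ne']
  refine ((tendsto_arsinh_sub_log.comp hlin).add
    (tendsto_log_mul_add_sub_log_natCast ha b)).congr fun N => ?_
  simp

lemma tendsto_sum_Icc_cellMean_sub_aCoeff {r : ℝ} (hr : 0 < r) (t : ℝ) :
    Tendsto (fun N : ℕ => ∑ m ∈ Finset.Icc (-N : ℤ) N,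
      (cellMean (fun s => 1 / √(r ^ 2 + s ^ 2)) (t - 2 * m * π) - aCoeff m))
      atTop (𝓝 (-log r / π)) := by
  have ha : 0 < 2 * π / r := by positivity
  have hlim := ((((tendsto_arsinh_mul_add_sub_log_natCast ha ((π + t) / r)).add
    (tendsto_arsinh_mul_add_sub_log_natCast ha ((π - t) / r))).const_mul (2 * π)⁻¹).sub
    (Real.tendsto_harmonic_sub_log.div_const π)).sub_const (aCoeff 0)
  have hval : (2 * π)⁻¹ * (log (2 * (2 * π / r)) + log (2 * (2 * π / r))) -
      eulerMascheroniConstant / π - aCoeff 0 = -log r / π := by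
    rw [aCoeff, if_pos rfl, show 2 * (2 * π / r) = 4 * π / r by ring,
      Real.log_div (by positivity) hr.ne']
    field_simp
    ring
  rw [hval] at hlim
  refine hlim.congr fun N => ?_
  have hneg : (t - (2 * N * π + π)) / r = -(2 * π / r * N + (π - t) / r) := by ring
  have hpos : (t + (2 * N * π + π)) / r = 2 * π / r * N + (π + t) / r := by ring
  rw [Finset.sum_sub_distrib, sum_Icc_cellMean (continuous_one_div_sqrt_sq_add_sq hr),
    sum_Icc_aCoeff, integral_one_div_sqrt_sq_add_sq hr, hneg, hpos, arsinh_neg]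
  field_simp
  ring

lemma pi_mul_tsum_sub_cellMean_eq {r t S : ℝ} (hr : 0 < r)
    (hS : HasSum (fun m : ℤ => 1 / √(r ^ 2 + (t - 2 * m * π) ^ 2) - aCoeff m) S) :
    π * ∑' m : ℤ, (1 / √(r ^ 2 + (t - 2 * m * π) ^ 2) -
      cellMean (fun s => 1 / √(r ^ 2 + s ^ 2)) (t - 2 * m * π)) = log r + π * S := by
  have hT := (summable_mul_left_iff (by positivity)).1
    (hasSum_integral_one_div_sub_cellMean hr t).summable
  have hsub := hS.sub hT.hasSum
  simp only [sub_sub_sub_cancel_left] at hsub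
  have hlim := tendsto_nhds_unique ((show Tendsto _ atTop _ from hsub).comp Finset.tendsto_Icc_neg)
    (tendsto_sum_Icc_cellMean_sub_aCoeff hr t)
  rw [eq_div_iff pi_pos.ne'] at hlim
  linear_combination -hlim

/-! ### Exponential decay of the modes -/

/-- `K₀` on the right half plane, given by the same integral as `besselK0`. -/
def complexBesselK0 (w : ℂ) : ℂ :=
  ∫ s in Set.Ioi (0 : ℝ), Complex.exp (-w * (Real.cosh s : ℂ))

lemma norm_cexp_neg_mul_cosh (w : ℂ) (s : ℝ) :
    ‖Complex.exp (-w * (Real.cosh s : ℂ))‖ = exp (-w.re * Real.cosh s) := by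
  rw [Complex.norm_exp, Complex.re_mul_ofReal, Complex.neg_re]

lemma norm_complexBesselK0_le (w : ℂ) : ‖complexBesselK0 w‖ ≤ besselK0 w.re := by
  refine (norm_integral_le_integral_norm _).trans_eq ?_
  simp only [norm_cexp_neg_mul_cosh, besselK0]

lemma complexBesselK0_ofReal (x : ℝ) : complexBesselK0 x = besselK0 x := by
  rw [complexBesselK0, besselK0, ← integral_complex_ofReal]
  push_cast
  rfl

lemma mul_exp_neg_mul_le {a b c : ℝ} (ha : 0 < a) (hb : 2 * a ≤ b) (hc : 0 ≤ c) :
    exp (-b * c) * c ≤ a⁻¹ * exp (-a * c) := by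
  have hac : a * c ≤ exp (a * c) := by linarith [add_one_le_exp (a * c)]
  calc exp (-b * c) * c ≤ exp (-a * c + -(a * c)) * (a⁻¹ * exp (a * c)) := by
        gcongr
        · nlinarith
        · rwa [inv_mul_eq_div, le_div_iff₀' ha]
    _ = a⁻¹ * exp (-a * c) := by
        rw [exp_add, exp_neg (a * c)]
        field_simp

lemma differentiableOn_complexBesselK0 :
    DifferentiableOn ℂ complexBesselK0 {w | 0 < w.re} := by
  intro w (hw : 0 < w.re)
  obtain ⟨a, ha, haw⟩ : ∃ a > 0, 2 * a < w.re := ⟨w.re / 3, by positivity, by linarith⟩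
  have hnhds : {v : ℂ | 2 * a < v.re} ∈ 𝓝 w :=
    (isOpen_lt continuous_const Complex.continuous_re).mem_nhds haw
  have hint : Integrable (fun s : ℝ => Complex.exp (-w * (Real.cosh s : ℂ)))
      (volume.restrict (Set.Ioi 0)) := by
    refine (integrable_norm_iff (Continuous.aestronglyMeasurable (by fun_prop))).1 ?_
    simp only [norm_cexp_neg_mul_cosh]
    exact integrableOn_exp_neg_mul_cosh hw
  have hbound (s : ℝ) (v : ℂ) (hv : 2 * a < v.re) :
      ‖Complex.exp (-v * (Real.cosh s : ℂ)) * (-1 * (Real.cosh s : ℂ))‖ ≤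
        a⁻¹ * exp (-a * Real.cosh s) := by
    have hc := (Real.cosh_pos s).le
    rw [norm_mul, norm_cexp_neg_mul_cosh, neg_one_mul, norm_neg, Complex.norm_real,
      Real.norm_of_nonneg hc]
    exact mul_exp_neg_mul_le ha hv.le hc
  exact (hasDerivAt_integral_of_dominated_loc_of_deriv_le hnhds
    (Eventually.of_forall fun v => Continuous.aestronglyMeasurable (by fun_prop)) hint
    (Continuous.aestronglyMeasurable (by fun_prop))
    (Eventually.of_forall hbound) ((integrableOn_exp_neg_mul_cosh ha).const_mul _)
    (Eventually.of_forall fun s v _ =>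
      ((hasDerivAt_id v).neg.mul_const _).cexp)).2.differentiableAt.differentiableWithinAt

/-- The inclusion of `ℝ³` in `ℂ³`. -/
def complexify : E3 →L[ℝ] (Fin 3 → ℂ) :=
  ContinuousLinearMap.pi fun i => Complex.ofRealCLM.comp (EuclideanSpace.proj i)

lemma complexify_apply (x : E3) (i : Fin 3) : complexify x i = (x i : ℂ) := rfl

/-- The mode `K₀(|m| r) e^{imt}` extended to complex coordinates, with `r` read as the principal
square root of `z₀² + z₁²`; it is holomorphic near the real points with `r ≠ 0`. -/
def besselMode (m : ℤ) (z : Fin 3 → ℂ) : ℂ :=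
  complexBesselK0 ((|(m : ℝ)| : ℝ) * (z 0 ^ 2 + z 1 ^ 2) ^ (2⁻¹ : ℂ)) *
    Complex.exp (Complex.I * (m : ℂ) * z 2)

lemma besselMode_complexify (m : ℤ) (x : E3) :
    besselMode m (complexify x) = ((besselK0 (|(m : ℝ)| * radius x) : ℝ) : ℂ) *
      Complex.exp (Complex.I * (m : ℂ) * ((x 2 : ℝ) : ℂ)) := by
  have hr : ((x 0 : ℂ) ^ 2 + (x 1 : ℂ) ^ 2) ^ (2⁻¹ : ℂ) = (radius x : ℂ) := by
    rw [radius, sqrt_eq_rpow, Complex.ofReal_cpow (by positivity)]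
    push_cast
    norm_num
  simp only [besselMode, complexify_apply]
  rw [hr, ← complexBesselK0_ofReal]
  push_cast
  rfl

lemma sub_le_re_cpow_inv_two {q : ℂ} {r ε : ℝ} (hr : 0 < r) (hq : ‖q - (r : ℂ) ^ 2‖ ≤ ε * r) :
    r - ε ≤ (q ^ (2⁻¹ : ℂ)).re := by
  set w := q ^ (2⁻¹ : ℂ)
  have hw : 0 ≤ w.re := by
    simpa only [w, Complex.cpow_inv_two_re] using sqrt_nonneg _
  have hw2 : w ^ 2 = q := by
    have h := Complex.cpow_nat_inv_pow q two_ne_zero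
    rwa [Nat.cast_ofNat] at h
  rw [← hw2, sq_sub_sq, norm_mul] at hq
  have hadd : r ≤ ‖w + r‖ := le_trans (by simpa using hw) (Complex.re_le_norm _)
  have hsub : ‖w - r‖ ≤ ε := by
    refine le_of_mul_le_mul_left ?_ hr
    calc r * ‖w - r‖ ≤ ‖w + r‖ * ‖w - r‖ := by gcongr
      _ ≤ r * ε := hq.trans_eq (mul_comm _ _)
  have hre := (abs_le.1 ((Complex.abs_re_le_norm _).trans hsub)).1
  rw [Complex.sub_re, Complex.ofReal_re] at hre
  linarith

lemma continuous_radius : Continuous radius := by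
  unfold radius
  fun_prop

lemma sq_radius (x : E3) : radius x ^ 2 = x 0 ^ 2 + x 1 ^ 2 := sq_sqrt (by positivity)

lemma radius_singPt (k : ℤ) : radius (singPt k) = 0 := by
  simp [radius, singPt]

lemma abs_add_abs_le_mul_radius (x : E3) : |x 0| + |x 1| ≤ 3 / 2 * radius x := by
  have hr : 0 ≤ radius x := sqrt_nonneg _
  refine (abs_le_of_sq_le_sq' ?_ (by linarith)).2
  nlinarith [sq_nonneg (|x 0| - |x 1|), sq_abs (x 0), sq_abs (x 1), sq_radius x]

section ModeBounds

variable {δ : ℝ} {x : E3} {z : Fin 3 → ℂ} {m : ℤ}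

lemma norm_sub_complexify_apply_le (hz : z ∈ ball (complexify x) (δ / 8)) (i : Fin 3) :
    ‖z i - (x i : ℂ)‖ ≤ δ / 8 :=
  (norm_le_pi_norm (z - complexify x) i).trans (mem_ball_iff_norm.1 hz).le

lemma norm_sq_add_sq_sub_sq_radius_le (hx : δ ≤ radius x)
    (hz : z ∈ ball (complexify x) (δ / 8)) :
    ‖z 0 ^ 2 + z 1 ^ 2 - (radius x : ℂ) ^ 2‖ ≤ δ / 2 * radius x := by
  have hδ : 0 < δ / 8 := pos_of_mem_ball hz
  have hsq (i : Fin 3) : ‖z i ^ 2 - (x i : ℂ) ^ 2‖ ≤ δ / 4 * |x i| + δ ^ 2 / 64 := by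
    have hi := norm_sub_complexify_apply_le hz i
    calc ‖z i ^ 2 - (x i : ℂ) ^ 2‖ = ‖2 * (x i : ℂ) * (z i - x i) + (z i - x i) ^ 2‖ := by ring_nf
      _ ≤ 2 * |x i| * ‖z i - (x i : ℂ)‖ + ‖z i - (x i : ℂ)‖ ^ 2 := by
          refine (norm_add_le _ _).trans_eq ?_
          simp
      _ ≤ 2 * |x i| * (δ / 8) + (δ / 8) ^ 2 := by gcongr
      _ = δ / 4 * |x i| + δ ^ 2 / 64 := by ring
  have hr : (radius x : ℂ) ^ 2 = (x 0 : ℂ) ^ 2 + (x 1 : ℂ) ^ 2 := by exact_mod_cast sq_radius x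
  rw [hr, add_sub_add_comm]
  refine (norm_add_le _ _).trans ?_
  nlinarith [hsq 0, hsq 1, abs_add_abs_le_mul_radius x]

lemma re_sq_add_sq_pos (hx : δ ≤ radius x) (hz : z ∈ ball (complexify x) (δ / 8)) :
    0 < (z 0 ^ 2 + z 1 ^ 2).re := by
  have hδ : 0 < δ / 8 := pos_of_mem_ball hz
  have hre := (abs_le.1 ((Complex.abs_re_le_norm _).trans
    (norm_sq_add_sq_sub_sq_radius_le hx hz))).1
  rw [Complex.sub_re, ← Complex.ofReal_pow, Complex.ofReal_re] at hre
  nlinarith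

lemma contDiffOn_besselMode (hm : m ≠ 0) (hx : δ ≤ radius x) (k : ℕ) :
    ContDiffOn ℂ k (besselMode m) (ball (complexify x) (δ / 8)) := by
  have hopen : IsOpen {q : ℂ | 0 < q.re} := isOpen_lt continuous_const Complex.continuous_re
  have hK : DifferentiableOn ℂ
      (fun q : ℂ => complexBesselK0 ((|(m : ℝ)| : ℝ) * q ^ (2⁻¹ : ℂ))) {q | 0 < q.re} := by
    refine differentiableOn_complexBesselK0.comp (f := fun q : ℂ => (|(m : ℝ)| : ℝ) * q ^ (2⁻¹ : ℂ))
      (fun q hq => ?_) fun q (hq : 0 < q.re) => ?_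
    · exact ((differentiableAt_id.cpow_const (Or.inl hq)).const_mul _).differentiableWithinAt
    · rw [Set.mem_ofPred_eq, Complex.re_ofReal_mul, Complex.cpow_inv_two_re]
      have := one_le_abs_intCast hm
      positivity
  have hq : ContDiffOn ℂ k (fun z : Fin 3 → ℂ => z 0 ^ 2 + z 1 ^ 2)
      (ball (complexify x) (δ / 8)) := by
    fun_prop
  refine ((hK.contDiffOn hopen).comp hq fun z hz => re_sq_add_sq_pos hx hz).mul ?_
  fun_prop

lemma norm_cexp_I_mul_intCast_mul_le (hz : z ∈ ball (complexify x) (δ / 8)) :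
    ‖Complex.exp (Complex.I * (m : ℂ) * z 2)‖ ≤ exp (|(m : ℝ)| * (δ / 8)) := by
  have him : |(z 2).im| ≤ δ / 8 := by
    simpa using (Complex.abs_im_le_norm _).trans (norm_sub_complexify_apply_le hz 2)
  have hre : (Complex.I * (m : ℂ) * z 2).re = -(m * (z 2).im) := by simp
  rw [Complex.norm_exp, hre]
  gcongr
  refine (neg_le_abs _).trans ?_
  rw [abs_mul]
  gcongr

lemma norm_besselMode_le (hm : m ≠ 0) (hx : δ ≤ radius x)
    (hz : z ∈ ball (complexify x) (δ / 8)) :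
    ‖besselMode m z‖ ≤ besselK0 (δ / 2) * exp (3 / 2 * δ) * exp (-radius x) *
      exp (-(3 / 8 * δ) * |(m : ℝ)|) := by
  have hδ : 0 < δ / 8 := pos_of_mem_ball hz
  have hm1 := one_le_abs_intCast hm
  have hw : radius x - δ / 2 ≤ ((z 0 ^ 2 + z 1 ^ 2) ^ (2⁻¹ : ℂ)).re :=
    sub_le_re_cpow_inv_two (by linarith) (norm_sq_add_sq_sub_sq_radius_le hx hz)
  set w := (z 0 ^ 2 + z 1 ^ 2) ^ (2⁻¹ : ℂ) with hwdef
  have hK : ‖complexBesselK0 ((|(m : ℝ)| : ℝ) * w)‖ ≤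
      exp (-(|(m : ℝ)| * w.re - δ / 2)) * besselK0 (δ / 2) := by
    refine (norm_complexBesselK0_le _).trans ?_
    rw [Complex.re_ofReal_mul]
    exact besselK0_le_exp_mul (by linarith) (by nlinarith)
  have hexp : -(|(m : ℝ)| * w.re - δ / 2) + |(m : ℝ)| * (δ / 8) ≤
      3 / 2 * δ + -radius x + -(3 / 8 * δ) * |(m : ℝ)| := by
    nlinarith [mul_le_mul_of_nonneg_left hw (abs_nonneg (m : ℝ)),
      mul_nonneg (sub_nonneg.2 hm1) (sub_nonneg.2 hx)]
  have hK0 := besselK0_nonneg (δ / 2)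
  calc ‖besselMode m z‖
      ≤ exp (-(|(m : ℝ)| * w.re - δ / 2)) * besselK0 (δ / 2) * exp (|(m : ℝ)| * (δ / 8)) := by
        rw [besselMode, norm_mul, ← hwdef]
        gcongr
        exact norm_cexp_I_mul_intCast_mul_le hz
    _ = besselK0 (δ / 2) * exp (-(|(m : ℝ)| * w.re - δ / 2) + |(m : ℝ)| * (δ / 8)) := by
        rw [exp_add]
        ring
    _ ≤ besselK0 (δ / 2) * exp (3 / 2 * δ + -radius x + -(3 / 8 * δ) * |(m : ℝ)|) := by
        gcongr
    _ = _ := by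
        rw [exp_add, exp_add]
        ring

end ModeBounds

/-- The sum of the holomorphic modes with `m ≠ 0`. -/
def besselSeries (z : Fin 3 → ℂ) : ℂ :=
  ∑' m : {m : ℤ // m ≠ 0}, besselMode m z

lemma exists_besselSeries_bound {δ : ℝ} (hδ : 0 < δ) :
    ∃ B : ℝ, ∀ x : E3, δ ≤ radius x →
      (∀ k : ℕ, ContDiffOn ℂ k besselSeries (ball (complexify x) (δ / 8))) ∧
      ∀ z ∈ ball (complexify x) (δ / 8), ‖besselSeries z‖ ≤ B * exp (-radius x) := by
  have hs : Summable fun m : {m : ℤ // m ≠ 0} => exp (-(3 / 8 * δ) * |((m : ℤ) : ℝ)|) :=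
    (summable_exp_neg_mul_abs_int (by positivity)).subtype _
  refine ⟨besselK0 (δ / 2) * exp (3 / 2 * δ) *
    ∑' m : {m : ℤ // m ≠ 0}, exp (-(3 / 8 * δ) * |((m : ℤ) : ℝ)|), fun x hx => ⟨fun k => ?_, ?_⟩⟩
  · exact contDiffOn_tsum_of_norm_le isOpen_ball (hs.mul_left _)
      (fun m => contDiffOn_besselMode m.2 hx k) fun m z hz => norm_besselMode_le m.2 hx hz
  · intro z hz
    refine (tsum_of_norm_bounded (hs.hasSum.mul_left _) fun m =>
      norm_besselMode_le m.2 hx hz).trans_eq ?_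
    ring

lemma exists_norm_iteratedFDeriv_comp_besselSeries_le {δ : ℝ} (hδ : 0 < δ) (A : ℂ →L[ℝ] ℝ)
    (k : ℕ) :
    ∃ C : ℝ, ∀ x : E3, δ ≤ radius x →
      ‖iteratedFDeriv ℝ k (A ∘ besselSeries ∘ complexify) x‖ ≤ C * exp (-radius x) := by
  obtain ⟨B, hB⟩ := exists_besselSeries_bound hδ
  refine ⟨‖A‖ * ‖complexify‖ ^ k * ((2 ^ (k + 1) / (δ / 8)) ^ k * B), fun x hx => ?_⟩
  obtain ⟨hcd, hle⟩ := hB x hx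
  have hρ : 0 < δ / 8 := by positivity
  calc _ ≤ ‖A‖ * ‖complexify‖ ^ k * ‖iteratedFDeriv ℂ k besselSeries (complexify x)‖ :=
        norm_iteratedFDeriv_clm_comp_comp_clm_le A complexify isOpen_ball (hcd k)
          (mem_ball_self hρ)
    _ ≤ ‖A‖ * ‖complexify‖ ^ k * ((2 ^ (k + 1) / (δ / 8)) ^ k * (B * exp (-radius x))) := by
        gcongr
        exact norm_iteratedFDeriv_le_of_forall_mem_ball hρ (hcd k) hle
    _ = _ := by ring

lemma gTerm_eq (m : ℤ) (x : E3) :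
    gTerm m x = -(1 / 2) * (1 / √(radius x ^ 2 + (x 2 - 2 * m * π) ^ 2) - aCoeff m) := by
  rw [gTerm, sq_radius]

lemma hasSum_besselK0_mul_cexp_of_hasSum_gTerm {x : E3} {g : ℝ} (hx : radius x ≠ 0)
    (hg : HasSum (fun m : ℤ => gTerm m x) g) :
    HasSum (fun m : {m : ℤ // m ≠ 0} => (besselK0 (|((m : ℤ) : ℝ)| * radius x) : ℂ) *
        Complex.exp (Complex.I * ((m : ℤ) : ℂ) * (x 2 : ℂ)))
      ((log (radius x) - 2 * π * g : ℝ) : ℂ) := by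
  have hr : 0 < radius x := (sqrt_nonneg _).lt_of_ne' hx
  have hS : HasSum (fun m : ℤ => 1 / √(radius x ^ 2 + (x 2 - 2 * m * π) ^ 2) - aCoeff m)
      (-2 * g) :=
    (hg.mul_left (-2)).congr_fun fun m => by
      rw [gTerm_eq]
      ring
  have hval : log (radius x) - 2 * π * g = log (radius x) + π * (-2 * g) := by ring
  rw [hval, ← pi_mul_tsum_sub_cellMean_eq hr hS]
  exact hasSum_besselK0_mul_cexp hr (x 2)

lemma sub_log_radius_eq_re_besselSeries {x : E3} {g : ℝ} (hx : radius x ≠ 0)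
    (hg : HasSum (fun m : ℤ => gTerm m x) g) :
    g - log (radius x) / (2 * π) = -(2 * π)⁻¹ * (besselSeries (complexify x)).re := by
  have htsum : besselSeries (complexify x) = ((log (radius x) - 2 * π * g : ℝ) : ℂ) := by
    simp only [besselSeries, besselMode_complexify]
    exact (hasSum_besselK0_mul_cexp_of_hasSum_gTerm hx hg).tsum_eq
  rw [htsum, Complex.ofReal_re]
  field_simp
  ring

lemma exists_norm_iteratedFDeriv_sub_log_radius_le {G : E3 → ℝ}
    (hG : ∀ x : E3, radius x ≠ 0 → HasSum (fun m : ℤ => gTerm m x) (G x))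
    {δ : ℝ} (hδ : 0 < δ) (k : ℕ) :
    ∃ C : ℝ, ∀ x : E3, δ ≤ radius x →
      ‖iteratedFDeriv ℝ k (fun y => G y - log (radius y) / (2 * π)) x‖ ≤ C * exp (-radius x) := by
  obtain ⟨C, hC⟩ := exists_norm_iteratedFDeriv_comp_besselSeries_le hδ
    (-(2 * π)⁻¹ • Complex.reCLM) k
  refine ⟨C, fun x hx => ?_⟩
  have heq : (fun y => G y - log (radius y) / (2 * π)) =ᶠ[𝓝 x]
      ⇑(-(2 * π)⁻¹ • Complex.reCLM) ∘ besselSeries ∘ complexify := by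
    filter_upwards [continuous_radius.continuousAt.eventually_ne (hδ.trans_le hx).ne'] with y hy
    exact sub_log_radius_eq_re_besselSeries hy (hG y hy)
  rw [heq.iteratedFDeriv ℝ k |>.eq_of_nhds]
  exact hC x hx

theorem green_function_bessel_expansion_general
    (G : E3 → ℝ)
    (hG : ∀ x : E3, radius x ≠ 0 → HasSum (fun m : ℤ => gTerm m x) (G x)) :
    (∀ x : E3, radius x ≠ 0 →
      HasSum (fun m : {m : ℤ // m ≠ 0} =>
          ((besselK0 (|((m : ℤ) : ℝ)| * radius x) : ℝ) : ℂ) *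
            Complex.exp (Complex.I * ((m : ℤ) : ℂ) * ((x 2 : ℝ) : ℂ)))
        (((Real.log (radius x) : ℝ) : ℂ) - 2 * Real.pi * ((G x : ℝ) : ℂ))) ∧
    ∀ δ > 0, ∀ n : ℕ, ∃ C > 0, ∀ x : E3, δ ≤ radius x → ∀ k : ℕ, k ≤ n →
      ‖iteratedFDeriv ℝ k (fun y => G y - Real.log (radius y) / (2 * Real.pi)) x‖ ≤
        C * Real.exp (-(radius x)) := by
  refine ⟨fun x hx => ?_, fun δ hδ n => ?_⟩
  · simpa using hasSum_besselK0_mul_cexp_of_hasSum_gTerm hx (hG x hx)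
  · choose C hC using exists_norm_iteratedFDeriv_sub_log_radius_le hG hδ
    obtain ⟨M, hM⟩ := ((Finset.range (n + 1)).image C).exists_le
    refine ⟨max M 1, by positivity, fun x hx k hk => (hC k x hx).trans ?_⟩
    have hle : C k ≤ M := hM _ (Finset.mem_image_of_mem C (Finset.mem_range_succ_iff.2 hk))
    gcongr
    exact hle.trans (le_max_left M 1)

/-- For `z ≠ 0` the periodic Green's function satisfies
`G(z,t) = (1/2π) log r − (1/2π) Σ_{m≠0} K₀(|m| r) e^{imt}`; consequently there is `C > 0`
with `|∇^k (G − (1/2π) log r)| ≤ C e^{−r}` for all `r ≥ 2` and `k = 0, 1, 2`. -/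
theorem green_function_bessel_expansion
    (G : E3 → ℝ)
    (hG : ∀ x : E3, (∀ k : ℤ, x ≠ singPt k) → HasSum (fun m : ℤ => gTerm m x) (G x)) :
    (∀ x : E3, radius x ≠ 0 →
      HasSum (fun m : {m : ℤ // m ≠ 0} =>
          ((besselK0 (|((m : ℤ) : ℝ)| * radius x) : ℝ) : ℂ) *
            Complex.exp (Complex.I * ((m : ℤ) : ℂ) * ((x 2 : ℝ) : ℂ)))
        (((Real.log (radius x) : ℝ) : ℂ) - 2 * Real.pi * ((G x : ℝ) : ℂ))) ∧
    ∃ C > 0, ∀ x : E3, 2 ≤ radius x → ∀ k : ℕ, k ≤ 2 →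
      ‖iteratedFDeriv ℝ k (fun y => G y - Real.log (radius y) / (2 * Real.pi)) x‖ ≤
        C * Real.exp (-(radius x)) := by
  obtain ⟨hsum, hbound⟩ := green_function_bessel_expansion_general G fun x hx =>
    hG x fun k hk => hx (hk ▸ radius_singPt k)
  exact ⟨hsum, hbound 2 two_pos 2⟩

end
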